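/- For every integer A ≥ 4 and every t ∈ [π/A, 3π/(2A)], setting s = At/4 ∈ [π/4, 3π/8], one has |sin(At)/(A·sin(t))| ≤ |sin(4s)/(4·sin(s))|. -/

import Mathlib

open Real

theorem GA_rescale_bound (A : ℤ) (hA : 4 ≤ A) (t : ℝ)
    (ht : t ∈ Set.Icc (π / A) (3 * π / (2 * A))) :
    |Real.sin (A * t) / (A * Real.sin t)| ≤
      |Real.sin (4 * (A * t / 4)) / (4 * Real.sin (A * t / 4))| := by
  obtain ⟨h1, h2⟩ := ht
  have hA' : (4 : ℝ) ≤ A := by exact_mod_cast hA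
  have hA0 : (0 : ℝ) < A := by linarith
  have hpi := Real.pi_pos
  rw [div_le_iff₀ hA0] at h1
  rw [le_div_iff₀ (by positivity)] at h2
  obtain ⟨s, hs⟩ : ∃ s : ℝ, s = A * t / 4 := ⟨_, rfl⟩
  have hs0 : 0 < s := by rw [hs]; linarith
  have hs1 : s < π := by rw [hs]; linarith
  have e : (4 : ℝ) * (A * t / 4) = A * t := by ring
  have hts : t = (4 / A) * s := by rw [hs]; field_simp
  have m1 : s ∈ Set.Icc 0 π := ⟨hs0.le, hs1.le⟩
  have m2 : (0 : ℝ) ∈ Set.Icc 0 π := ⟨le_rfl, hpi.le⟩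
  have p1 : 0 ≤ 4 / (A : ℝ) := by positivity
  have p2 : 0 ≤ 1 - 4 / (A : ℝ) := by rw [sub_nonneg, div_le_one hA0]; exact hA'
  have p3 : 4 / (A : ℝ) + (1 - 4 / (A : ℝ)) = 1 := by ring
  have hc := strictConcaveOn_sin_Icc.concaveOn.2 m1 m2 p1 p2 p3
  simp only [smul_eq_mul, Real.sin_zero, mul_zero, add_zero] at hc
  rw [← hts] at hc
  have hsin : 0 < Real.sin s := Real.sin_pos_of_pos_of_lt_pi hs0 hs1
  have key : 4 * Real.sin s ≤ A * Real.sin t := by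
    have := mul_le_mul_of_nonneg_left hc hA0.le
    have e2 : (A : ℝ) * (4 / A * Real.sin s) = 4 * Real.sin s := by field_simp
    linarith
  rw [e, ← hs, abs_div, abs_div]
  have h4 : 0 < 4 * Real.sin s := by positivity
  rw [abs_of_pos h4, abs_of_pos (h4.trans_le key)]
  exact div_le_div_of_nonneg_left (abs_nonneg _) h4 key
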